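/- Let n ≥ 1 and let u : ℝⁿ → ℝ be a C⁴ function satisfying the ∞-Laplace equation Δ_∞ u := Σ_{j,k=1}^{n} u_{x_j}·u_{x_k}·u_{x_j x_k} = 0 at every point of ℝⁿ. Then u is affine linear, i.e. u(x) = ⟨a, x⟩ + c for some a ∈ ℝⁿ and c ∈ ℝ. -/

import Mathlib

open scoped RealInnerProductSpace

/-- `j`-th first partial derivative of `u : ℝⁿ → ℝ`. -/
noncomputable def pd {n : ℕ} (u : EuclideanSpace ℝ (Fin n) → ℝ)
    (x : EuclideanSpace ℝ (Fin n)) (j : Fin n) : ℝ :=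
  fderiv ℝ u x (EuclideanSpace.single j 1)

/-- Second partial derivative `u_{x_j x_k}` of `u : ℝⁿ → ℝ`. -/
noncomputable def pd2 {n : ℕ} (u : EuclideanSpace ℝ (Fin n) → ℝ)
    (x : EuclideanSpace ℝ (Fin n)) (j k : Fin n) : ℝ :=
  fderiv ℝ (fun y => fderiv ℝ u y (EuclideanSpace.single j 1)) x (EuclideanSpace.single k 1)

/-!
Write `U = ∇u`, `W = 1 + |U|²` and `X = ∇(½ log W)`, so that `D²u U = W X` and the equation reads
`⟨X, U⟩ = 0`. Differentiating the latter relation twice gives the Bochner-type inequality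
`D²Y(U, U) ≥ 2W (Y² - DY(X))` for `Y = |X|²`. Evaluated at a maximum point of `(R² - |x|²)² Y` in
the ball of radius `R`, it yields the interior bound `(R² - |x|²) |X(x)| ≤ 7R`, hence `X = 0` on
letting `R → ∞`. Therefore `D²u U = 0`: `|U|` is constant and `U` is constant along the line through
the origin in direction `U(0)`. On this line `u` grows as fast as its Lipschitz constant allows, in
both directions, which forces `u` to be affine.
-/

open Filter Topology
open scoped Gradient

section Differentiability

variable {𝕜 E F : Type*} [NontriviallyNormedField 𝕜] [NormedAddCommGroup E] [NormedSpace 𝕜 E]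
  [NormedAddCommGroup F] [NormedSpace 𝕜 F] {f : E → F}

theorem differentiable_fderiv_of_contDiff (hf : ContDiff 𝕜 2 f) :
    Differentiable 𝕜 (fderiv 𝕜 f) :=
  (hf.fderiv_right (m := 1) (by norm_num)).differentiable one_ne_zero

theorem hasDerivAt_comp_add_smul {x v : E} {t : 𝕜} (hf : DifferentiableAt 𝕜 f (x + t • v)) :
    HasDerivAt (fun s : 𝕜 => f (x + s • v)) (fderiv 𝕜 f (x + t • v) v) t := by
  have hline : HasDerivAt (fun s : 𝕜 => x + s • v) v t := by
    simpa using ((hasDerivAt_id t).smul_const v).const_add x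
  exact hf.hasFDerivAt.comp_hasDerivAt t hline

end Differentiability

section SecondOrderConditions

theorem deriv_deriv_nonpos_of_isLocalMax {f : ℝ → ℝ} {a : ℝ} (hf : ContinuousAt f a)
    (hmax : IsLocalMax f a) : deriv (deriv f) a ≤ 0 := by
  by_contra! hpos
  have hmin : IsLocalMin f a := isLocalMin_of_deriv_deriv_pos hpos hmax.deriv_eq_zero hf
  have hconst : f =ᶠ[𝓝 a] fun _ => f a := by
    filter_upwards [hmax, hmin] with t hle hge using le_antisymm hle hge
  have hzero : deriv (deriv f) a = 0 := by
    rw [hconst.deriv.deriv_eq]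
    simp
  exact hpos.ne' hzero

variable {E : Type*} [NormedAddCommGroup E] [NormedSpace ℝ E]

theorem fderiv_fderiv_apply_self_nonpos_of_isLocalMax {f : E → ℝ} {x : E} (hf : ContDiff ℝ 2 f)
    (hmax : IsLocalMax f x) (v : E) : fderiv ℝ (fderiv ℝ f) x v v ≤ 0 := by
  have hdf : Differentiable ℝ f := hf.differentiable two_ne_zero
  have hddf : Differentiable ℝ (fderiv ℝ f) := differentiable_fderiv_of_contDiff hf
  have hline : Tendsto (fun s : ℝ => x + s • v) (𝓝 0) (𝓝 x) :=
    Continuous.tendsto' (by fun_prop) _ _ (by simp)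
  have hmax_line : IsLocalMax (fun s : ℝ => f (x + s • v)) 0 := by
    simpa [IsLocalMax, IsMaxFilter] using hline.eventually hmax
  have hderiv : deriv (fun s : ℝ => f (x + s • v)) = fun s => fderiv ℝ f (x + s • v) v :=
    funext fun s => (hasDerivAt_comp_add_smul (hdf _)).deriv
  have hderiv_deriv : deriv (deriv fun s : ℝ => f (x + s • v)) 0 = fderiv ℝ (fderiv ℝ f) x v v := by
    rw [hderiv]
    simpa using ((hasDerivAt_comp_add_smul (x := x) (v := v) (t := 0) (hddf _)).clm_apply
      (hasDerivAt_const 0 v)).deriv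
  rw [← hderiv_deriv]
  exact deriv_deriv_nonpos_of_isLocalMax (hasDerivAt_comp_add_smul (hdf _)).continuousAt hmax_line

variable {η f : E → ℝ} {x : E}

theorem fderiv_sq_mul (hη : DifferentiableAt ℝ η x) (hf : DifferentiableAt ℝ f x) :
    fderiv ℝ (fun y => η y ^ 2 * f y) x =
      η x ^ 2 • fderiv ℝ f x + (2 * η x * f x) • fderiv ℝ η x := by
  have h := (hη.hasFDerivAt.pow 2).mul hf.hasFDerivAt
  refine (HasFDerivAt.fderiv h).trans ?_
  ext v
  simp only [Nat.add_one_sub_one, pow_one, nsmul_eq_mul, Nat.cast_ofNat, add_apply, smul_apply,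
    smul_eq_mul, add_right_inj]
  ring

theorem fderiv_fderiv_sq_mul_apply_self (hη : ContDiff ℝ 2 η) (hf : ContDiff ℝ 2 f) (v : E) :
    fderiv ℝ (fderiv ℝ fun y => η y ^ 2 * f y) x v v =
      η x ^ 2 * fderiv ℝ (fderiv ℝ f) x v v + 4 * η x * fderiv ℝ η x v * fderiv ℝ f x v
        + 2 * f x * fderiv ℝ η x v ^ 2 + 2 * η x * f x * fderiv ℝ (fderiv ℝ η) x v v := by
  have hdη : Differentiable ℝ η := hη.differentiable two_ne_zero
  have hdf : Differentiable ℝ f := hf.differentiable two_ne_zero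
  have hddη : Differentiable ℝ (fderiv ℝ η) := differentiable_fderiv_of_contDiff hη
  have hddf : Differentiable ℝ (fderiv ℝ f) := differentiable_fderiv_of_contDiff hf
  have hfirst : fderiv ℝ (fun y => η y ^ 2 * f y) =
      fun y => η y ^ 2 • fderiv ℝ f y + (2 * η y * f y) • fderiv ℝ η y :=
    funext fun y => fderiv_sq_mul (hdη y) (hdf y)
  rw [hfirst]
  have h := (((hdη x).hasFDerivAt.pow 2).smul (hddf x).hasFDerivAt).add
    ((((hdη x).hasFDerivAt.const_mul 2).mul (hdf x).hasFDerivAt).smul (hddη x).hasFDerivAt)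
  refine (DFunLike.congr_fun (DFunLike.congr_fun (HasFDerivAt.fderiv h) v) v).trans ?_
  simp only [Nat.add_one_sub_one, pow_one, nsmul_eq_mul, Nat.cast_ofNat, Pi.mul_apply, add_apply,
    smul_apply, ContinuousLinearMap.smulRight_apply, smul_eq_mul]
  ring

theorem mul_fderiv_eq_of_isLocalMax_sq_mul (hη : DifferentiableAt ℝ η x)
    (hf : DifferentiableAt ℝ f x) (hηx : η x ≠ 0)
    (hmax : IsLocalMax (fun y => η y ^ 2 * f y) x) (v : E) :
    η x * fderiv ℝ f x v = -2 * fderiv ℝ η x v * f x := by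
  have hcrit := DFunLike.congr_fun ((fderiv_sq_mul hη hf).symm.trans hmax.fderiv_eq_zero) v
  simp only [add_apply, smul_apply, smul_eq_mul, zero_apply] at hcrit
  refine mul_left_cancel₀ hηx ?_
  linear_combination hcrit

theorem sq_mul_fderiv_fderiv_le_of_isLocalMax_sq_mul (hη : ContDiff ℝ 2 η) (hf : ContDiff ℝ 2 f)
    (hηx : η x ≠ 0) (hmax : IsLocalMax (fun y => η y ^ 2 * f y) x) (v : E) :
    η x ^ 2 * fderiv ℝ (fderiv ℝ f) x v v ≤
      f x * (6 * fderiv ℝ η x v ^ 2 - 2 * η x * fderiv ℝ (fderiv ℝ η) x v v) := by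
  have hfirst := mul_fderiv_eq_of_isLocalMax_sq_mul (hη.differentiable two_ne_zero x)
    (hf.differentiable two_ne_zero x) hηx hmax v
  have hsecond := fderiv_fderiv_apply_self_nonpos_of_isLocalMax ((hη.pow 2).mul hf) hmax v
  rw [fderiv_fderiv_sq_mul_apply_self hη hf] at hsecond
  linear_combination hsecond - 4 * fderiv ℝ η x v * hfirst

end SecondOrderConditions

section NormSq

variable {G E : Type*} [NormedAddCommGroup G] [NormedSpace ℝ G] [NormedAddCommGroup E]
  [InnerProductSpace ℝ E] {X : G → E} {x : G}

theorem fderiv_norm_sq_comp_apply (hX : DifferentiableAt ℝ X x) (v : G) :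
    fderiv ℝ (fun y => ‖X y‖ ^ 2) x v = 2 * ⟪X x, fderiv ℝ X x v⟫ := by
  refine (DFunLike.congr_fun (HasFDerivAt.fderiv hX.hasFDerivAt.norm_sq) v).trans ?_
  simp [two_mul]

theorem fderiv_fderiv_norm_sq_comp_apply (hX : ContDiff ℝ 2 X) (v w : G) :
    fderiv ℝ (fderiv ℝ fun y => ‖X y‖ ^ 2) x v w =
      2 * (⟪fderiv ℝ X x v, fderiv ℝ X x w⟫ + ⟪X x, fderiv ℝ (fderiv ℝ X) x v w⟫) := by
  have hdX : Differentiable ℝ X := hX.differentiable two_ne_zero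
  have hddX : Differentiable ℝ (fderiv ℝ X) := differentiable_fderiv_of_contDiff hX
  have hddY : Differentiable ℝ (fderiv ℝ fun y => ‖X y‖ ^ 2) :=
    differentiable_fderiv_of_contDiff (hX.norm_sq ℝ)
  have heval : fderiv ℝ (fun y => fderiv ℝ (fun z => ‖X z‖ ^ 2) y w) x v =
      fderiv ℝ (fderiv ℝ fun y => ‖X y‖ ^ 2) x v w := by
    simp [fderiv_clm_apply (hddY x) (differentiableAt_const w)]
  have h := ((hdX x).hasFDerivAt.inner ℝ
    ((hddX x).hasFDerivAt.clm_apply (hasFDerivAt_const w x))).const_mul 2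
  rw [← heval, funext fun y => fderiv_norm_sq_comp_apply (hdX y) w]
  refine (DFunLike.congr_fun (HasFDerivAt.fderiv h) v).trans ?_
  simp only [ContinuousLinearMap.comp_zero, zero_add, smul_apply, ContinuousLinearMap.comp_apply,
    ContinuousLinearMap.prod_apply, ContinuousLinearMap.flip_apply, fderivInnerCLM_apply,
    smul_eq_mul]
  ring

end NormSq

variable {E : Type*} [NormedAddCommGroup E] [InnerProductSpace ℝ E]

section InteriorEstimate

theorem fderiv_sq_sub_norm_sq_apply (R : ℝ) (x v : E) :
    fderiv ℝ (fun y : E => R ^ 2 - ‖y‖ ^ 2) x v = -2 * ⟪x, v⟫ := by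
  simp [fderiv_const_sub]

theorem fderiv_fderiv_sq_sub_norm_sq_apply_self (R : ℝ) (x v : E) :
    fderiv ℝ (fderiv ℝ fun y : E => R ^ 2 - ‖y‖ ^ 2) x v v = -2 * ‖v‖ ^ 2 := by
  have hfirst : fderiv ℝ (fun y : E => R ^ 2 - ‖y‖ ^ 2) = fun y => -fderiv ℝ (‖·‖ ^ 2) y :=
    funext fun y => fderiv_const_sub _
  rw [hfirst, fderiv_fun_neg, neg_apply, neg_apply]
  refine (congrArg Neg.neg (fderiv_fderiv_norm_sq_comp_apply contDiff_id v v)).trans ?_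
  have hid : fderiv ℝ (id : E → E) = fun _ => .id ℝ E := funext fun _ => fderiv_id
  simp [hid]

variable {U X : E → E} {W : E → ℝ}

theorem sq_sub_norm_sq_mul_fderiv_eq_of_isLocalMax {f : E → ℝ} {R : ℝ} {x : E}
    (hf : DifferentiableAt ℝ f x) (hx : ‖x‖ < R)
    (hmax : IsLocalMax (fun y => (R ^ 2 - ‖y‖ ^ 2) ^ 2 * f y) x) (v : E) :
    (R ^ 2 - ‖x‖ ^ 2) * fderiv ℝ f x v = 4 * ⟪x, v⟫ * f x := by
  have hη : DifferentiableAt ℝ (fun y : E => R ^ 2 - ‖y‖ ^ 2) x :=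
    (contDiff_norm_sq ℝ).differentiable one_ne_zero x |>.const_sub _
  have hηx : 0 < R ^ 2 - ‖x‖ ^ 2 := sub_pos.2 (pow_lt_pow_left₀ hx (norm_nonneg x) two_ne_zero)
  have hfirst := mul_fderiv_eq_of_isLocalMax_sq_mul hη hf hηx.ne' hmax v
  rw [fderiv_sq_sub_norm_sq_apply] at hfirst
  linear_combination hfirst

theorem sq_sub_norm_sq_sq_mul_fderiv_fderiv_le_of_isLocalMax {f : E → ℝ} {R : ℝ} {x : E}
    (hf : ContDiff ℝ 2 f) (hfx : 0 ≤ f x) (hx : ‖x‖ < R)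
    (hmax : IsLocalMax (fun y => (R ^ 2 - ‖y‖ ^ 2) ^ 2 * f y) x) (v : E) :
    (R ^ 2 - ‖x‖ ^ 2) ^ 2 * fderiv ℝ (fderiv ℝ f) x v v ≤ f x * (28 * (R ^ 2 * ‖v‖ ^ 2)) := by
  have hη : ContDiff ℝ 2 fun y : E => R ^ 2 - ‖y‖ ^ 2 := contDiff_const.sub (contDiff_norm_sq ℝ)
  have hηx : 0 < R ^ 2 - ‖x‖ ^ 2 := sub_pos.2 (pow_lt_pow_left₀ hx (norm_nonneg x) two_ne_zero)
  have hsecond := sq_mul_fderiv_fderiv_le_of_isLocalMax_sq_mul hη hf hηx.ne' hmax v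
  rw [fderiv_sq_sub_norm_sq_apply, fderiv_fderiv_sq_sub_norm_sq_apply_self] at hsecond
  have hxv : ⟪x, v⟫ ^ 2 ≤ R ^ 2 * ‖v‖ ^ 2 := by
    calc ⟪x, v⟫ ^ 2 ≤ (‖x‖ * ‖v‖) ^ 2 := sq_le_sq.2 (by simpa using abs_real_inner_le_norm x v)
      _ = ‖x‖ ^ 2 * ‖v‖ ^ 2 := mul_pow ..
      _ ≤ R ^ 2 * ‖v‖ ^ 2 := by gcongr
  have hηv : (R ^ 2 - ‖x‖ ^ 2) * ‖v‖ ^ 2 ≤ R ^ 2 * ‖v‖ ^ 2 := by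
    gcongr
    exact sub_le_self _ (sq_nonneg _)
  exact hsecond.trans (mul_le_mul_of_nonneg_left (by linarith) hfx)

theorem sq_sub_norm_sq_mul_norm_le_of_isLocalMax {R w : ℝ} {x p : E}
    (hY : ContDiff ℝ 2 fun y => ‖X y‖ ^ 2) (hx : ‖x‖ < R)
    (hmax : IsLocalMax (fun y => (R ^ 2 - ‖y‖ ^ 2) ^ 2 * ‖X y‖ ^ 2) x)
    (hw : 0 < w) (hp : ‖p‖ ^ 2 ≤ w)
    (hineq : 2 * w * ((‖X x‖ ^ 2) ^ 2 - fderiv ℝ (fun y => ‖X y‖ ^ 2) x (X x)) ≤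
      fderiv ℝ (fderiv ℝ fun y => ‖X y‖ ^ 2) x p p) :
    (R ^ 2 - ‖x‖ ^ 2) * ‖X x‖ ≤ 7 * R := by
  have hR : 0 < R := (norm_nonneg x).trans_lt hx
  have hη : 0 < R ^ 2 - ‖x‖ ^ 2 := sub_pos.2 (pow_lt_pow_left₀ hx (norm_nonneg x) two_ne_zero)
  have hfirst := sq_sub_norm_sq_mul_fderiv_eq_of_isLocalMax
    (hY.differentiable two_ne_zero x) hx hmax (X x)
  have hsecond : (R ^ 2 - ‖x‖ ^ 2) ^ 2 * fderiv ℝ (fderiv ℝ fun y => ‖X y‖ ^ 2) x p p ≤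
      ‖X x‖ ^ 2 * (28 * (R ^ 2 * w)) :=
    (sq_sub_norm_sq_sq_mul_fderiv_fderiv_le_of_isLocalMax hY (sq_nonneg _) hx hmax p).trans
      (by gcongr)
  have hxX : ⟪x, X x⟫ ≤ R * ‖X x‖ := (real_inner_le_norm _ _).trans (by gcongr)
  generalize R ^ 2 - ‖x‖ ^ 2 = η at *
  generalize fderiv ℝ (fun y => ‖X y‖ ^ 2) x (X x) = D at *
  generalize fderiv ℝ (fderiv ℝ fun y => ‖X y‖ ^ 2) x p p = H at *
  rcases (norm_nonneg (X x)).eq_or_lt with hq | hq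
  · rw [← hq, mul_zero]
    positivity
  generalize ‖X x‖ = q at *
  have hηD : η * D ≤ 4 * (R * q) * q ^ 2 := by
    rw [hfirst]
    gcongr
  have hquad : (η * q) ^ 2 ≤ 4 * R * (η * q) + 14 * R ^ 2 := by
    have hlower := (mul_le_mul_of_nonneg_left hineq (sq_nonneg η)).trans hsecond
    have hdrift := mul_le_mul_of_nonneg_left hηD (show 0 ≤ 2 * w * η by positivity)
    refine le_of_mul_le_mul_left ?_ (show 0 < 2 * w * q ^ 2 by positivity)
    linarith
  -- `t² = 4Rt + 14R²` has the positive root `(2 + 3√2)R < 7R`.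
  nlinarith

theorem sq_sub_norm_sq_mul_norm_le [ProperSpace E] {R : ℝ}
    (hY : ContDiff ℝ 2 fun y => ‖X y‖ ^ 2) (hW : ∀ x, 0 < W x) (hUW : ∀ x, ‖U x‖ ^ 2 ≤ W x)
    (hineq : ∀ x, 2 * W x * ((‖X x‖ ^ 2) ^ 2 - fderiv ℝ (fun y => ‖X y‖ ^ 2) x (X x)) ≤
      fderiv ℝ (fderiv ℝ fun y => ‖X y‖ ^ 2) x (U x) (U x))
    {z : E} (hz : ‖z‖ < R) :
    (R ^ 2 - ‖z‖ ^ 2) * ‖X z‖ ≤ 7 * R := by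
  have hR : 0 < R := (norm_nonneg z).trans_lt hz
  have hcont : Continuous fun y => (R ^ 2 - ‖y‖ ^ 2) ^ 2 * ‖X y‖ ^ 2 :=
    Continuous.mul (by fun_prop) hY.continuous
  obtain ⟨x, hxR, hmax⟩ := (isCompact_closedBall (0 : E) R).exists_isMaxOn
    ⟨0, by simpa using hR.le⟩ hcont.continuousOn
  have hzx : (R ^ 2 - ‖z‖ ^ 2) ^ 2 * ‖X z‖ ^ 2 ≤ (R ^ 2 - ‖x‖ ^ 2) ^ 2 * ‖X x‖ ^ 2 :=
    hmax (by simpa using hz.le)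
  rw [← mul_pow, ← mul_pow] at hzx
  refine le_of_sq_le_sq (hzx.trans ?_) (by positivity)
  rcases (mem_closedBall_zero_iff.1 hxR).eq_or_lt with hxR | hxR
  · rw [hxR, sub_self, zero_mul, zero_pow two_ne_zero]
    positivity
  have hloc := hmax.isLocalMax (Metric.closedBall_mem_nhds_of_mem (by simpa using hxR))
  have hη : 0 ≤ R ^ 2 - ‖x‖ ^ 2 := by nlinarith [norm_nonneg x]
  exact pow_le_pow_left₀ (by positivity)
    (sq_sub_norm_sq_mul_norm_le_of_isLocalMax hY hxR hloc (hW x) (hUW x) (hineq x)) 2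

theorem eq_zero_of_forall_le_fderiv_fderiv_norm_sq [ProperSpace E]
    (hY : ContDiff ℝ 2 fun y => ‖X y‖ ^ 2) (hW : ∀ x, 0 < W x) (hUW : ∀ x, ‖U x‖ ^ 2 ≤ W x)
    (hineq : ∀ x, 2 * W x * ((‖X x‖ ^ 2) ^ 2 - fderiv ℝ (fun y => ‖X y‖ ^ 2) x (X x)) ≤
      fderiv ℝ (fderiv ℝ fun y => ‖X y‖ ^ 2) x (U x) (U x)) :
    X = 0 := by
  ext1 z
  by_contra hne
  have hpos : 0 < ‖X z‖ := norm_pos_iff.2 hne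
  have hz : ‖z‖ < ‖z‖ + 8 / ‖X z‖ := by simpa using hpos
  have hbound := sq_sub_norm_sq_mul_norm_le hY hW hUW hineq hz
  have hcancel : ((‖z‖ + 8 / ‖X z‖) ^ 2 - ‖z‖ ^ 2) * ‖X z‖ = 16 * ‖z‖ + 8 * (8 / ‖X z‖) := by
    field_simp
    ring
  linarith [norm_nonneg z]

end InteriorEstimate

section BochnerInequality

variable {U X : E → E}

theorem isSymmetric_fderiv_apply {F : Type*} [NormedAddCommGroup F] [NormedSpace ℝ F]
    {T : F → E →L[ℝ] E} {x : F} (hT : DifferentiableAt ℝ T x)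
    (hsymm : ∀ y, (T y : E →ₗ[ℝ] E).IsSymmetric) (c : F) :
    (fderiv ℝ T x c : E →ₗ[ℝ] E).IsSymmetric := by
  intro a b
  have hleft := (hT.hasFDerivAt.clm_apply (hasFDerivAt_const a x)).inner ℝ (hasFDerivAt_const b x)
  have hright := (hasFDerivAt_const a x).inner ℝ (hT.hasFDerivAt.clm_apply (hasFDerivAt_const b x))
  have heq : (fun y => ⟪T y a, b⟫) = fun y => ⟪a, T y b⟫ := funext fun y => hsymm y a b
  have := DFunLike.congr_fun (hleft.unique (heq ▸ hright)) c
  simpa [fderivInnerCLM_apply] using this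

theorem fderiv_apply_eq_neg_of_inner_eq_zero {x : E} (hU : DifferentiableAt ℝ U x)
    (hX : DifferentiableAt ℝ X x) (hUsymm : (fderiv ℝ U x : E →ₗ[ℝ] E).IsSymmetric)
    (hXsymm : (fderiv ℝ X x : E →ₗ[ℝ] E).IsSymmetric) (horth : ∀ y, ⟪X y, U y⟫ = 0) :
    fderiv ℝ U x (X x) = -fderiv ℝ X x (U x) := by
  rw [eq_neg_iff_add_eq_zero]
  refine ext_inner_right ℝ fun v => ?_
  have hderiv : fderiv ℝ (fun y => ⟪X y, U y⟫) x v = 0 := by simp [horth]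
  have hUv : ⟪fderiv ℝ U x (X x), v⟫ = ⟪X x, fderiv ℝ U x v⟫ := hUsymm _ _
  have hXv : ⟪fderiv ℝ X x (U x), v⟫ = ⟪U x, fderiv ℝ X x v⟫ := hXsymm _ _
  rw [inner_add_left, hUv, hXv, real_inner_comm (fderiv ℝ X x v), inner_zero_left, ← hderiv,
    fderiv_inner_apply ℝ hX hU]

theorem inner_fderiv_apply_self_of_inner_eq_zero {x : E} {w : ℝ} (hU : DifferentiableAt ℝ U x)
    (hX : DifferentiableAt ℝ X x) (hUsymm : (fderiv ℝ U x : E →ₗ[ℝ] E).IsSymmetric)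
    (hXsymm : (fderiv ℝ X x : E →ₗ[ℝ] E).IsSymmetric) (horth : ∀ y, ⟪X y, U y⟫ = 0)
    (hUU : fderiv ℝ U x (U x) = w • X x) :
    ⟪fderiv ℝ X x (U x), U x⟫ = -(w * ‖X x‖ ^ 2) := by
  have hUX : ⟪fderiv ℝ U x (X x), U x⟫ = ⟪X x, fderiv ℝ U x (U x)⟫ := hUsymm _ _
  rw [fderiv_apply_eq_neg_of_inner_eq_zero hU hX hUsymm hXsymm horth, hUU, inner_neg_left,
    inner_smul_right, real_inner_self_eq_norm_sq] at hUX
  linarith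

-- Differentiate `⟪DX U, U⟫ = -(1 + |U|²)|X|²` in the direction `X`, using `DU X = -DX U`.
theorem inner_fderiv_fderiv_apply_eq (hU : Differentiable ℝ U) (hX : ContDiff ℝ 2 X)
    (hUsymm : ∀ x, (fderiv ℝ U x : E →ₗ[ℝ] E).IsSymmetric)
    (hXsymm : ∀ x, (fderiv ℝ X x : E →ₗ[ℝ] E).IsSymmetric) (horth : ∀ x, ⟪X x, U x⟫ = 0)
    (hUU : ∀ x, fderiv ℝ U x (U x) = (1 + ‖U x‖ ^ 2) • X x) (x : E) :
    ⟪fderiv ℝ (fderiv ℝ X) x (X x) (U x), U x⟫ =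
      2 * ‖fderiv ℝ X x (U x)‖ ^ 2 - 2 * (1 + ‖U x‖ ^ 2) * (‖X x‖ ^ 2) ^ 2
        - (1 + ‖U x‖ ^ 2) * fderiv ℝ (fun y => ‖X y‖ ^ 2) x (X x) := by
  have hdX : Differentiable ℝ X := hX.differentiable two_ne_zero
  have hddX : Differentiable ℝ (fderiv ℝ X) := differentiable_fderiv_of_contDiff hX
  have hUX : fderiv ℝ U x (X x) = -fderiv ℝ X x (U x) :=
    fderiv_apply_eq_neg_of_inner_eq_zero (hU x) (hdX x) (hUsymm x) (hXsymm x) horth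
  have hDXU : (fun y => ⟪fderiv ℝ X y (U y), U y⟫) = fun y => -((1 + ‖U y‖ ^ 2) * ‖X y‖ ^ 2) := by
    ext y
    exact inner_fderiv_apply_self_of_inner_eq_zero (hU y) (hdX y) (hUsymm y) (hXsymm y) horth
      (hUU y)
  have hleft : fderiv ℝ (fun y => ⟪fderiv ℝ X y (U y), U y⟫) x (X x) =
      ⟪fderiv ℝ (fderiv ℝ X) x (X x) (U x), U x⟫ - 2 * ‖fderiv ℝ X x (U x)‖ ^ 2 := by
    have hsymm : ⟪fderiv ℝ X x (fderiv ℝ X x (U x)), U x⟫ =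
        ⟪fderiv ℝ X x (U x), fderiv ℝ X x (U x)⟫ := hXsymm x _ _
    rw [fderiv_inner_apply ℝ ((hddX x).clm_apply (hU x)) (hU x), fderiv_clm_apply (hddX x) (hU x)]
    simp only [hUX, inner_neg_right, real_inner_self_eq_norm_sq, add_apply,
      ContinuousLinearMap.comp_apply, map_neg, ContinuousLinearMap.flip_apply, inner_add_left,
      inner_neg_left, hsymm]
    ring
  have hright : fderiv ℝ (fun y => -((1 + ‖U y‖ ^ 2) * ‖X y‖ ^ 2)) x (X x) =
      -(2 * (1 + ‖U x‖ ^ 2) * (‖X x‖ ^ 2) ^ 2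
        + (1 + ‖U x‖ ^ 2) * fderiv ℝ (fun y => ‖X y‖ ^ 2) x (X x)) := by
    have hW : fderiv ℝ (fun y => ‖U y‖ ^ 2) x (X x) = 2 * ((1 + ‖U x‖ ^ 2) * ‖X x‖ ^ 2) := by
      have hsymm : ⟪fderiv ℝ U x (U x), X x⟫ = ⟪U x, fderiv ℝ U x (X x)⟫ := hUsymm x _ _
      rw [fderiv_norm_sq_comp_apply (hU x), ← hsymm, hUU, real_inner_smul_left,
        real_inner_self_eq_norm_sq]
    rw [fderiv_fun_neg, fderiv_fun_mul (((hU x).norm_sq ℝ).const_add 1) ((hdX x).norm_sq ℝ),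
      fderiv_const_add]
    simp only [neg_apply, add_apply, smul_apply, smul_eq_mul, hW]
    ring
  rw [← hDXU, hleft] at hright
  linear_combination hright

theorem mul_sq_le_norm_sq_of_inner_eq_neg_mul {v u : E} {y : ℝ}
    (h : ⟪v, u⟫ = -((1 + ‖u‖ ^ 2) * y)) : (1 + ‖u‖ ^ 2) * y ^ 2 ≤ ‖v‖ ^ 2 := by
  have hcs : ((1 + ‖u‖ ^ 2) * y) ^ 2 ≤ ‖v‖ ^ 2 * (1 + ‖u‖ ^ 2) := by
    calc ((1 + ‖u‖ ^ 2) * y) ^ 2 = ⟪v, u⟫ ^ 2 := by rw [h, neg_sq]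
      _ ≤ (‖v‖ * ‖u‖) ^ 2 := sq_le_sq.2 (by simpa using abs_real_inner_le_norm v u)
      _ ≤ ‖v‖ ^ 2 * (1 + ‖u‖ ^ 2) := by rw [mul_pow]; gcongr; simp
  refine le_of_mul_le_mul_right ?_ (show 0 < 1 + ‖u‖ ^ 2 by positivity)
  linarith

theorem two_mul_le_fderiv_fderiv_norm_sq (hU : Differentiable ℝ U) (hX : ContDiff ℝ 2 X)
    (hUsymm : ∀ x, (fderiv ℝ U x : E →ₗ[ℝ] E).IsSymmetric)
    (hXsymm : ∀ x, (fderiv ℝ X x : E →ₗ[ℝ] E).IsSymmetric) (horth : ∀ x, ⟪X x, U x⟫ = 0)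
    (hUU : ∀ x, fderiv ℝ U x (U x) = (1 + ‖U x‖ ^ 2) • X x) (x : E) :
    2 * (1 + ‖U x‖ ^ 2) * ((‖X x‖ ^ 2) ^ 2 - fderiv ℝ (fun y => ‖X y‖ ^ 2) x (X x)) ≤
      fderiv ℝ (fderiv ℝ fun y => ‖X y‖ ^ 2) x (U x) (U x) := by
  have hdX : Differentiable ℝ X := hX.differentiable two_ne_zero
  have hddX : Differentiable ℝ (fderiv ℝ X) := differentiable_fderiv_of_contDiff hX
  have hswap : ⟪X x, fderiv ℝ (fderiv ℝ X) x (U x) (U x)⟫ =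
      ⟪fderiv ℝ (fderiv ℝ X) x (X x) (U x), U x⟫ := by
    have hcomm : fderiv ℝ (fderiv ℝ X) x (U x) (X x) = fderiv ℝ (fderiv ℝ X) x (X x) (U x) :=
      hX.contDiffAt.isSymmSndFDerivAt (by simp) _ _
    rw [← hcomm]
    exact (isSymmetric_fderiv_apply (hddX x) hXsymm (U x) (X x) (U x)).symm
  have hcs : (1 + ‖U x‖ ^ 2) * (‖X x‖ ^ 2) ^ 2 ≤ ‖fderiv ℝ X x (U x)‖ ^ 2 :=
    mul_sq_le_norm_sq_of_inner_eq_neg_mul <| inner_fderiv_apply_self_of_inner_eq_zero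
      (hU x) (hdX x) (hUsymm x) (hXsymm x) horth (hUU x)
  rw [fderiv_fderiv_norm_sq_comp_apply hX, hswap, real_inner_self_eq_norm_sq,
    inner_fderiv_fderiv_apply_eq hU hX hUsymm hXsymm horth hUU]
  linarith

end BochnerInequality

section ZeroAcceleration

theorem eq_zero_of_hasDerivAt_clm_apply {F : Type*} [NormedAddCommGroup F] [NormedSpace ℝ F]
    {f : ℝ → F} {B : ℝ → F →L[ℝ] F} (hB : Continuous B)
    (hf : ∀ t, HasDerivAt f (B t (f t)) t) {t₀ : ℝ} (hf₀ : f t₀ = 0) : f = 0 := by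
  ext t
  let a := min t t₀ - 1
  let b := max t t₀ + 1
  have hmem : ∀ s ∈ Set.uIcc t t₀, s ∈ Set.Ioo a b := fun s hs =>
    ⟨(sub_one_lt _).trans_le hs.1, hs.2.trans_lt (lt_add_one _)⟩
  obtain ⟨K, hK⟩ := (isCompact_Icc (a := a) (b := b)).bddAbove_image hB.nnnorm.continuousOn
  have hlip : ∀ s ∈ Set.Ioo a b, LipschitzOnWith K (B s) Set.univ := fun s hs =>
    ((B s).lipschitz.weaken (hK ⟨s, Set.Ioo_subset_Icc_self hs, rfl⟩)).lipschitzOnWith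
  exact ODE_solution_unique_of_mem_Ioo hlip (hmem t₀ Set.right_mem_uIcc)
    (fun s _ => ⟨hf s, trivial⟩) (g := 0)
    (fun s _ => ⟨by simp [hasDerivAt_zero], trivial⟩) hf₀ (hmem t Set.left_mem_uIcc)

theorem apply_add_smul_eq_of_fderiv_apply_self_eq_zero {F : Type*} [NormedAddCommGroup F]
    [NormedSpace ℝ F] {U : F → F} (hU : ContDiff ℝ 1 U) (hUU : ∀ x, fderiv ℝ U x (U x) = 0)
    (x : F) (t : ℝ) : U (x + t • U x) = U x := by
  -- Since `DU U = 0`, the difference `f` solves a linear equation along the line.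
  let f : ℝ → F := fun s => U (x + s • U x) - U x
  let B : ℝ → F →L[ℝ] F := fun s => -fderiv ℝ U (x + s • U x)
  have hB : Continuous B := by
    have := hU.continuous_fderiv one_ne_zero
    fun_prop
  have hf : ∀ s, HasDerivAt f (B s (f s)) s := fun s => by
    have hBf : B s (f s) = fderiv ℝ U (x + s • U x) (U x) := by simp [B, f, hUU]
    rw [hBf]
    exact (hasDerivAt_comp_add_smul (hU.differentiable one_ne_zero _)).sub_const _
  have hf₀ : f 0 = 0 := by simp [f]
  exact sub_eq_zero.1 (congrFun (eq_zero_of_hasDerivAt_clm_apply hB hf hf₀) t)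

theorem norm_eq_norm_of_fderiv_apply_self_eq_zero {U : E → E} (hU : Differentiable ℝ U)
    (hUsymm : ∀ x, (fderiv ℝ U x : E →ₗ[ℝ] E).IsSymmetric) (hUU : ∀ x, fderiv ℝ U x (U x) = 0)
    (x y : E) : ‖U x‖ = ‖U y‖ := by
  have hderiv : ∀ z, fderiv ℝ (fun z => ‖U z‖ ^ 2) z = 0 := fun z => by
    ext v
    have hsymm : ⟪fderiv ℝ U z (U z), v⟫ = ⟪U z, fderiv ℝ U z v⟫ := hUsymm z _ _
    simp [fderiv_norm_sq_comp_apply (hU z), ← hsymm, hUU]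
  have := is_const_of_fderiv_eq_zero (hU.norm_sq ℝ) hderiv x y
  exact (sq_eq_sq₀ (norm_nonneg _) (norm_nonneg _)).1 this

end ZeroAcceleration

section ExtremalGrowth

variable {f : E → ℝ} {p : E}

theorem add_inner_le_of_lipschitzWith_of_ray (hf : LipschitzWith ‖p‖₊ f)
    (hray : ∀ t : ℝ, 0 < t → f 0 + t * ‖p‖ ^ 2 ≤ f (t • p)) (y : E) : f 0 + ⟪p, y⟫ ≤ f y := by
  have hbound : ∀ t : ℝ, 0 < t → f 0 + ⟪p, y⟫ - f y ≤ ‖y‖ ^ 2 / 2 / t := fun t ht => by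
    have hlip : f (t • p) - f y ≤ ‖p‖ * ‖t • p - y‖ := by
      simpa [Real.dist_eq, dist_eq_norm] using (le_abs_self _).trans (hf.dist_le_mul (t • p) y)
    have hnorm : ‖t • p - y‖ ^ 2 = t ^ 2 * ‖p‖ ^ 2 - 2 * t * ⟪p, y⟫ + ‖y‖ ^ 2 := by
      rw [norm_sub_sq_real, norm_smul, real_inner_smul_left, mul_pow, Real.norm_eq_abs, sq_abs]
      ring
    have hamgm : t * (‖p‖ * ‖t • p - y‖) ≤ t ^ 2 * ‖p‖ ^ 2 - t * ⟪p, y⟫ + ‖y‖ ^ 2 / 2 := by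
      linarith [sq_nonneg (t * ‖p‖ - ‖t • p - y‖)]
    rw [le_div_iff₀ ht]
    linarith [mul_le_mul_of_nonneg_left ((hray t ht).trans (sub_le_iff_le_add.1 hlip)) ht.le]
  have hlim : Tendsto (fun t : ℝ => ‖y‖ ^ 2 / 2 / t) atTop (𝓝 0) :=
    tendsto_id.const_div_atTop _
  linarith [ge_of_tendsto hlim ((eventually_gt_atTop 0).mono hbound)]

theorem eq_add_inner_of_lipschitzWith_of_line (hf : LipschitzWith ‖p‖₊ f)
    (hline : ∀ t : ℝ, f (t • p) = f 0 + t * ‖p‖ ^ 2) (y : E) : f y = f 0 + ⟪p, y⟫ := by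
  have hge := add_inner_le_of_lipschitzWith_of_ray hf (fun t _ => (hline t).ge) y
  have hle := add_inner_le_of_lipschitzWith_of_ray (f := -f) (p := -p) (by simpa using hf.neg)
    (fun t _ => by simp [← neg_smul, hline]) y
  simp only [Pi.neg_apply, inner_neg_left] at hle
  linarith

end ExtremalGrowth

section Gradient

variable [CompleteSpace E] {u : E → ℝ}

theorem contDiff_gradient {m n : WithTop ℕ∞} (hu : ContDiff ℝ n u) (hmn : m + 1 ≤ n) :
    ContDiff ℝ m (∇ u) :=
  (InnerProductSpace.toDual ℝ E).symm.contDiff.comp (hu.fderiv_right hmn)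

theorem inner_fderiv_gradient_left (u : E → ℝ) (x v w : E) :
    ⟪fderiv ℝ (∇ u) x v, w⟫ = fderiv ℝ (fderiv ℝ u) x v w := by
  have hcomp : fderiv ℝ (∇ u) x = _ :=
    (InnerProductSpace.toDual ℝ E).symm.comp_fderiv (f := fderiv ℝ u) (x := x)
  rw [hcomp]
  exact InnerProductSpace.toDual_symm_apply

theorem isSymmetric_fderiv_gradient (hu : ContDiff ℝ 2 u) (x : E) :
    (fderiv ℝ (∇ u) x : E →ₗ[ℝ] E).IsSymmetric := fun v w => by
  have hsymm : IsSymmSndFDerivAt ℝ u x := hu.contDiffAt.isSymmSndFDerivAt (by simp)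
  exact (inner_fderiv_gradient_left u x v w).trans <| (hsymm v w).trans <|
    (inner_fderiv_gradient_left u x w v).symm.trans (real_inner_comm _ _)

theorem lipschitzWith_of_norm_gradient_le {K : NNReal} (hu : Differentiable ℝ u)
    (hK : ∀ x, ‖∇ u x‖ ≤ K) : LipschitzWith K u :=
  lipschitzWith_of_nnnorm_fderiv_le hu fun x => by
    simpa [← toDual_gradient, ← NNReal.coe_le_coe] using hK x

theorem eq_inner_add_of_fderiv_gradient_apply_self_eq_zero (hu : ContDiff ℝ 2 u)
    (hUU : ∀ x, fderiv ℝ (∇ u) x (∇ u x) = 0) (y : E) : u y = ⟪∇ u 0, y⟫ + u 0 := by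
  have hdu : Differentiable ℝ u := hu.differentiable two_ne_zero
  have hU : ContDiff ℝ 1 (∇ u) := contDiff_gradient hu (by norm_num)
  have hlip : LipschitzWith ‖∇ u 0‖₊ u := lipschitzWith_of_norm_gradient_le hdu fun x =>
    (norm_eq_norm_of_fderiv_apply_self_eq_zero (hU.differentiable one_ne_zero)
      (isSymmetric_fderiv_gradient hu) hUU x 0).le
  have hconst : ∀ t : ℝ, ∇ u (0 + t • ∇ u 0) = ∇ u 0 :=
    apply_add_smul_eq_of_fderiv_apply_self_eq_zero hU hUU 0
  have hline : ∀ t : ℝ, u (t • ∇ u 0) = u 0 + t * ‖∇ u 0‖ ^ 2 := fun t => by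
    have hderiv : ∀ s : ℝ, HasDerivAt (fun s : ℝ => u (0 + s • ∇ u 0) - s * ‖∇ u 0‖ ^ 2) 0 s :=
      fun s => by
        have := (hasDerivAt_comp_add_smul (x := 0) (v := ∇ u 0) (t := s) (hdu _)).sub
          ((hasDerivAt_id s).mul_const (‖∇ u 0‖ ^ 2))
        rw [← inner_gradient_left, hconst, real_inner_self_eq_norm_sq, one_mul, sub_self] at this
        exact this
    have := is_const_of_deriv_eq_zero (fun s => (hderiv s).differentiableAt)
      (fun s => (hderiv s).deriv) t 0
    simp only [zero_add, zero_smul, zero_mul, sub_zero] at this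
    linarith
  rw [add_comm]
  exact eq_add_inner_of_lipschitzWith_of_line hlip hline y

end Gradient

section InfinityHarmonic

variable [CompleteSpace E] {u : E → ℝ}

/-- The `∞`-Laplace operator `Δ_∞ u = D²u(∇u, ∇u)` in coordinate-free form. -/
noncomputable def infinityLaplacian (u : E → ℝ) (x : E) : ℝ :=
  fderiv ℝ (fderiv ℝ u) x (∇ u x) (∇ u x)

/-- The function `½ log(1 + |∇u|²)`: a substitute for `log |∇u|` that is smooth at the critical
points of `u`. -/
noncomputable def logGradient (u : E → ℝ) (x : E) : ℝ :=
  1 / 2 * Real.log (1 + ‖∇ u x‖ ^ 2)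

theorem contDiff_logGradient {m n : WithTop ℕ∞} (hu : ContDiff ℝ n u) (hmn : m + 1 ≤ n) :
    ContDiff ℝ m (logGradient u) :=
  contDiff_const.mul <| (contDiff_const.add ((contDiff_gradient hu hmn).norm_sq ℝ)).log
    fun x => by positivity

theorem fderiv_gradient_apply_self (hu : ContDiff ℝ 2 u) (x : E) :
    fderiv ℝ (∇ u) x (∇ u x) = (1 + ‖∇ u x‖ ^ 2) • ∇ (logGradient u) x := by
  have hpos : 0 < 1 + ‖∇ u x‖ ^ 2 := by positivity
  have hU : DifferentiableAt ℝ (∇ u) x :=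
    (contDiff_gradient (m := 1) hu (by norm_num)).differentiable one_ne_zero x
  have hderiv := ((((hU.norm_sq ℝ).const_add 1).hasFDerivAt.log hpos.ne').const_mul (1 / 2)).fderiv
  refine ext_inner_right ℝ fun v => ?_
  have hsymm : ⟪fderiv ℝ (∇ u) x (∇ u x), v⟫ = ⟪∇ u x, fderiv ℝ (∇ u) x v⟫ :=
    isSymmetric_fderiv_gradient hu x _ _
  have hv : fderiv ℝ (logGradient u) x v =
      1 / 2 * ((1 + ‖∇ u x‖ ^ 2)⁻¹ * (2 * ⟪∇ u x, fderiv ℝ (∇ u) x v⟫)) := by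
    rw [← fderiv_norm_sq_comp_apply hU]
    rw [fderiv_const_add] at hderiv
    exact DFunLike.congr_fun hderiv v
  rw [real_inner_smul_left, inner_gradient_left, hv, hsymm]
  field_simp

theorem inner_gradient_logGradient_gradient (hu : ContDiff ℝ 2 u) {x : E}
    (hinf : infinityLaplacian u x = 0) : ⟪∇ (logGradient u) x, ∇ u x⟫ = 0 := by
  rw [infinityLaplacian, ← inner_fderiv_gradient_left, fderiv_gradient_apply_self hu,
    real_inner_smul_left] at hinf
  exact (mul_eq_zero.1 hinf).resolve_left (by positivity)

end InfinityHarmonic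

section Bernstein

variable [ProperSpace E] {u : E → ℝ}

theorem gradient_logGradient_eq_zero (hu : ContDiff ℝ 4 u)
    (hinf : ∀ x, infinityLaplacian u x = 0) : ∇ (logGradient u) = 0 := by
  have hu₂ : ContDiff ℝ 2 u := hu.of_le (by norm_num)
  have hL : ContDiff ℝ 3 (logGradient u) := contDiff_logGradient hu (by norm_num)
  have hX : ContDiff ℝ 2 (∇ (logGradient u)) := contDiff_gradient hL (by norm_num)
  have hU : Differentiable ℝ (∇ u) :=
    (contDiff_gradient (m := 1) hu₂ (by norm_num)).differentiable one_ne_zero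
  have hbochner := two_mul_le_fderiv_fderiv_norm_sq hU hX (isSymmetric_fderiv_gradient hu₂)
    (isSymmetric_fderiv_gradient (hL.of_le (by norm_num)))
    (fun x => inner_gradient_logGradient_gradient hu₂ (hinf x)) (fderiv_gradient_apply_self hu₂)
  exact eq_zero_of_forall_le_fderiv_fderiv_norm_sq (hX.norm_sq ℝ) (fun x => by positivity)
    (fun x => le_add_of_nonneg_left zero_le_one) hbochner

theorem yu_infinity_laplace_bernstein_general (hu : ContDiff ℝ 4 u)
    (hinf : ∀ x, infinityLaplacian u x = 0) :
    ∃ (a : E) (c : ℝ), ∀ x : E, u x = ⟪a, x⟫ + c := by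
  have hu₂ : ContDiff ℝ 2 u := hu.of_le (by norm_num)
  have hUU : ∀ x, fderiv ℝ (∇ u) x (∇ u x) = 0 := fun x => by
    simp [fderiv_gradient_apply_self hu₂, gradient_logGradient_eq_zero hu hinf]
  exact ⟨∇ u 0, u 0, eq_inner_add_of_fderiv_gradient_apply_self_eq_zero hu₂ hUU⟩

end Bernstein

section EuclideanSpace

variable {n : ℕ} {u : EuclideanSpace ℝ (Fin n) → ℝ} {x : EuclideanSpace ℝ (Fin n)}

theorem pd_eq_gradient_apply (u : EuclideanSpace ℝ (Fin n) → ℝ) (x : EuclideanSpace ℝ (Fin n))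
    (j : Fin n) : pd u x j = ∇ u x j := by
  rw [pd, ← inner_gradient_left, EuclideanSpace.inner_single_right]
  simp

theorem pd2_eq_fderiv_fderiv_apply (hu : DifferentiableAt ℝ (fderiv ℝ u) x) (j k : Fin n) :
    pd2 u x j k =
      fderiv ℝ (fderiv ℝ u) x (EuclideanSpace.single k 1) (EuclideanSpace.single j 1) := by
  simp [pd2, fderiv_clm_apply hu (differentiableAt_const _)]

theorem sum_pd_mul_pd_mul_pd2 (hu : DifferentiableAt ℝ (fderiv ℝ u) x) :
    ∑ j, ∑ k, pd u x j * pd u x k * pd2 u x j k = infinityLaplacian u x := by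
  have hgrad : ∇ u x = ∑ k, pd u x k • EuclideanSpace.single k 1 := by
    simpa [pd_eq_gradient_apply] using ((EuclideanSpace.basisFun (Fin n) ℝ).sum_repr (∇ u x)).symm
  rw [infinityLaplacian, hgrad]
  simp only [map_sum, map_smul, sum_apply, smul_apply, smul_eq_mul, pd2_eq_fderiv_fderiv_apply hu,
    Finset.mul_sum, mul_assoc]

end EuclideanSpace

/-- **Yu's Bernstein-type theorem**: every entire `C⁴` solution of the `∞`-Laplace
equation `Δ_∞ u = Σ_{j,k} u_{x_j} u_{x_k} u_{x_j x_k} = 0` over `ℝⁿ` is affine linear. -/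
theorem yu_infinity_laplace_bernstein (n : ℕ) (hn : 1 ≤ n)
    (u : EuclideanSpace ℝ (Fin n) → ℝ) (hu : ContDiff ℝ 4 u)
    (hinf : ∀ x : EuclideanSpace ℝ (Fin n),
      ∑ j, ∑ k, pd u x j * pd u x k * pd2 u x j k = 0) :
    ∃ (a : EuclideanSpace ℝ (Fin n)) (c : ℝ),
      ∀ x : EuclideanSpace ℝ (Fin n), u x = ⟪a, x⟫ + c := by
  refine yu_infinity_laplace_bernstein_general hu fun x => ?_
  rw [← sum_pd_mul_pd_mul_pd2 (differentiable_fderiv_of_contDiff (hu.of_le (by norm_num)) x), hinf]
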